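/- Let p ≥ 1, let V ⊆ V(C_{2p+1}) with |V| = n < 2p+1 and n odd, let G = C̄_{2p+1}[V], and let G_1, …, G_s be the connected components of the graph C_{2p+1}[V]. Then cl(G) = ⌈n/2⌉ holds if and only if exactly one of the numbers |V(G_1)|, …, |V(G_s)| is odd (otherwise cl(G) > ⌈n/2⌉). -/

import Mathlib

/-!
Deleting a vertex from a cycle leaves a path, so every component of a proper induced subgraph of a
cycle is a path. A path on `k` vertices has independence number `⌈k / 2⌉` and independence numbers
add up over components, so twice the independence number is the number of vertices plus the number
of components of odd order. Cliques of the complement are independent sets, and for `n` odd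
`2 * ⌈n / 2⌉ = n + 1`, which singles out the case of one odd component.
-/

section

open SimpleGraph

variable {V W α : Type*} {G : SimpleGraph V} {H : SimpleGraph W}

theorem isIndepSet_image_embedding (f : G ↪g H) {s : Set V} :
    H.IsIndepSet (f '' s) ↔ G.IsIndepSet s := by
  rw [IsIndepSet, f.injective.injOn.pairwise_image]
  exact forall₂_congr fun _ _ ↦ forall₂_congr fun _ _ ↦ imp_congr_right fun _ ↦
    not_congr f.map_adj_iff

theorem indepNum_le_of_embedding [Finite W] (f : G ↪g H) : G.indepNum ≤ H.indepNum := by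
  have : Finite V := .of_injective f f.injective
  obtain ⟨s, hs⟩ := G.exists_isNIndepSet_indepNum
  have hmap : H.IsIndepSet (s.map f.toEmbedding) := by
    rw [Finset.coe_map]
    exact (isIndepSet_image_embedding f).2 hs.isIndepSet
  simpa only [Finset.card_map, hs.card_eq] using hmap.card_le_indepNum

theorem indepNum_congr [Finite W] (e : G ≃g H) : G.indepNum = H.indepNum :=
  have : Finite V := .of_injective e e.injective
  (indepNum_le_of_embedding e.toEmbedding).antisymm (indepNum_le_of_embedding e.symm.toEmbedding)

theorem indepNum_le_sum_indepNum_toSimpleGraph [Finite V] [Fintype G.ConnectedComponent] :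
    G.indepNum ≤ ∑ c : G.ConnectedComponent, c.toSimpleGraph.indepNum := by
  classical
  obtain ⟨s, hs⟩ := G.exists_isNIndepSet_indepNum
  have hindep (c : G.ConnectedComponent) :
      c.toSimpleGraph.IsIndepSet (s.subtype (· ∈ c.supp) : Set c.supp) := by
    refine (isIndepSet_image_embedding (Embedding.induce c.supp)).1 (hs.isIndepSet.mono ?_)
    rintro _ ⟨v, hv, rfl⟩
    exact Finset.mem_subtype.1 hv
  calc G.indepNum = s.card := hs.card_eq.symm
    _ = ∑ c, {v ∈ s | G.connectedComponentMk v = c}.card :=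
        Finset.card_eq_sum_card_fiberwise fun _ _ ↦ Finset.mem_univ _
    _ = ∑ c : G.ConnectedComponent, (s.subtype (· ∈ c.supp)).card := by
        simp only [Finset.card_subtype, ConnectedComponent.mem_supp_iff]
    _ ≤ ∑ c : G.ConnectedComponent, c.toSimpleGraph.indepNum :=
        Finset.sum_le_sum fun c _ ↦ (hindep c).card_le_indepNum

theorem sum_indepNum_toSimpleGraph_le [Finite V] [Fintype G.ConnectedComponent] :
    ∑ c : G.ConnectedComponent, c.toSimpleGraph.indepNum ≤ G.indepNum := by
  choose t ht using fun c : G.ConnectedComponent ↦ c.toSimpleGraph.exists_isNIndepSet_indepNum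
  let e : (Σ c : G.ConnectedComponent, c) ≃ V := Equiv.sigmaFiberEquiv G.connectedComponentMk
  have hindep : G.IsIndepSet ((Finset.univ.sigma t).map e.toEmbedding : Finset V) := by
    rw [Finset.coe_map]
    rintro _ ⟨⟨c, v⟩, hv, rfl⟩ _ ⟨⟨d, w⟩, hw, rfl⟩ hne hadj
    obtain rfl : c = d := by
      rw [← v.2, ← w.2]
      exact ConnectedComponent.sound hadj.reachable
    exact (ht c).isIndepSet (Finset.mem_sigma.1 hv).2 (Finset.mem_sigma.1 hw).2
      (fun h ↦ hne (congrArg Subtype.val h)) hadj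
  calc ∑ c : G.ConnectedComponent, c.toSimpleGraph.indepNum
      = ((Finset.univ.sigma t).map e.toEmbedding).card := by
        simp only [Finset.card_map, Finset.card_sigma, (ht _).card_eq]
    _ ≤ G.indepNum := hindep.card_le_indepNum

theorem indepNum_eq_sum_indepNum_toSimpleGraph [Finite V] [Fintype G.ConnectedComponent] :
    G.indepNum = ∑ c : G.ConnectedComponent, c.toSimpleGraph.indepNum :=
  indepNum_le_sum_indepNum_toSimpleGraph.antisymm sum_indepNum_toSimpleGraph_le

theorem sum_ncard_supp [Finite V] [Fintype G.ConnectedComponent] :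
    ∑ c : G.ConnectedComponent, c.supp.ncard = Nat.card V := by
  rw [← Nat.card_congr (Equiv.sigmaFiberEquiv G.connectedComponentMk), Nat.card_sigma]
  rfl

theorem indepNum_pathGraph (n : ℕ) : (pathGraph n).indepNum = (n + 1) / 2 := by
  apply le_antisymm
  · obtain ⟨s, hs⟩ := (pathGraph n).exists_isNIndepSet_indepNum
    rw [← hs.card_eq, ← Finset.card_range ((n + 1) / 2)]
    -- An independent set contains at most one vertex of each pair `{2 * i, 2 * i + 1}`.
    refine Finset.card_le_card_of_injOn (fun v ↦ v.val / 2) (fun v _ ↦ ?_) fun v hv w hw hvw ↦ ?_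
    · simp only [Finset.coe_range, Set.mem_Iio]
      omega
    · by_contra hne
      have hnadj : ¬(pathGraph n).Adj v w := hs.isIndepSet hv hw hne
      rw [pathGraph_adj] at hnadj
      simp only at hvw
      omega
  · let t : Finset (Fin n) := {v | Even v.val}
    have hindep : (pathGraph n).IsIndepSet t := by
      intro v hv w hw _ hadj
      simp only [t, Finset.coe_filter_univ, Set.mem_ofPred_eq] at hv hw
      rw [pathGraph_adj] at hadj
      grind
    refine le_trans ?_ hindep.card_le_indepNum
    rw [← Finset.card_range ((n + 1) / 2)]
    refine Finset.card_le_card_of_surjOn (fun v ↦ v.val / 2) fun i hi ↦ ?_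
    rw [Finset.coe_range, Set.mem_Iio] at hi
    exact ⟨⟨2 * i, by omega⟩, by simp [t], by simp⟩

theorem uIcc_eq_pair_of_hasse_adj [LinearOrder α] {a b : α} (h : (hasse α).Adj a b) :
    Set.uIcc a b = {a, b} := by
  rcases h with h | h
  · rw [Set.uIcc_of_le h.le, h.Icc_eq]
  · rw [Set.uIcc_of_ge h.le, h.Icc_eq, Set.pair_comm]

theorem uIcc_subset_range_of_walk [LinearOrder α] (f : G →g hasse α) {u v : V} (w : G.Walk u v) :
    Set.uIcc (f u) (f v) ⊆ Set.range f := by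
  induction w with
  | nil => simp
  | cons h _ ih =>
    refine Set.uIcc_subset_uIcc_union_uIcc.trans (Set.union_subset ?_ ih)
    rw [uIcc_eq_pair_of_hasse_adj (f.map_adj h)]
    exact Set.pair_subset (Set.mem_range_self _) (Set.mem_range_self _)

theorem ordConnected_range_of_preconnected [LinearOrder α] (hG : G.Preconnected)
    (f : G →g hasse α) : (Set.range f).OrdConnected := by
  rw [Set.ordConnected_iff_uIcc_subset]
  rintro _ ⟨u, rfl⟩ _ ⟨v, rfl⟩
  exact (hG u v).elim fun w ↦ uIcc_subset_range_of_walk f w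

theorem nonempty_iso_pathGraph_of_embedding_hasse [Finite V] [LinearOrder α]
    (hG : G.Preconnected) (f : G ↪g hasse α) : Nonempty (G ≃g pathGraph (Nat.card V)) := by
  have := Fintype.ofFinite V
  let : LinearOrder V := LinearOrder.lift' f f.injective
  let g : V ↪o α := ⟨f.toEmbedding, Iff.rfl⟩
  have hcovBy (u v : V) : g u ⋖ g v ↔ u ⋖ v :=
    Set.OrdConnected.apply_covBy_apply_iff g (ordConnected_range_of_preconnected hG f.toHom)
  have hadj (u v : V) : G.Adj u v ↔ u ⋖ v ∨ v ⋖ u := by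
    rw [← hcovBy, ← hcovBy]
    exact f.map_adj_iff.symm
  let e : V ≃o Fin (Nat.card V) :=
    (Fintype.orderIsoFinOfCardEq V Nat.card_eq_fintype_card.symm).symm
  refine ⟨⟨e.toEquiv, fun {u v} ↦ ?_⟩⟩
  rw [hadj]
  exact or_congr (apply_covBy_apply_iff e) (apply_covBy_apply_iff e)

/-- `G` is a linear forest: every connected component is isomorphic to a path. This is the class of
graphs to which the proper induced subgraphs of a cycle belong. The order of the path is an
existential since the isomorphism forces it to be the order of the component. -/
def IsLinearForest (G : SimpleGraph V) : Prop :=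
  ∀ c : G.ConnectedComponent, ∃ n, Nonempty (c.toSimpleGraph ≃g pathGraph n)

namespace IsLinearForest

theorem of_embedding_hasse [Finite V] [LinearOrder α] (f : G ↪g hasse α) : IsLinearForest G :=
  fun c ↦ ⟨_, nonempty_iso_pathGraph_of_embedding_hasse c.connected_toSimpleGraph.preconnected
    (f.comp (Embedding.induce c.supp))⟩

theorem indepNum_toSimpleGraph (hG : IsLinearForest G) (c : G.ConnectedComponent) :
    c.toSimpleGraph.indepNum = (c.supp.ncard + 1) / 2 := by
  obtain ⟨n, ⟨e⟩⟩ := hG c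
  have hn : c.supp.ncard = n := (Nat.card_congr e.toEquiv).trans (Nat.card_fin n)
  rw [indepNum_congr e, indepNum_pathGraph, hn]

theorem two_mul_indepNum [Finite V] (hG : IsLinearForest G) :
    2 * G.indepNum = Nat.card V + G.oddComponents.ncard := by
  classical
  have := Fintype.ofFinite G.ConnectedComponent
  have hodd : G.oddComponents.ncard =
      ∑ c : G.ConnectedComponent, if Odd c.supp.ncard then 1 else 0 := by
    rw [Finset.sum_boole, Nat.cast_id, ← Set.ncard_coe_finset, Finset.coe_filter_univ]
  calc 2 * G.indepNum = ∑ c : G.ConnectedComponent, 2 * ((c.supp.ncard + 1) / 2) := by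
        simp only [indepNum_eq_sum_indepNum_toSimpleGraph, hG.indepNum_toSimpleGraph,
          Finset.mul_sum]
    _ = ∑ c : G.ConnectedComponent, (c.supp.ncard + if Odd c.supp.ncard then 1 else 0) :=
        Finset.sum_congr rfl fun c _ ↦ by grind
    _ = Nat.card V + G.oddComponents.ncard := by
        rw [Finset.sum_add_distrib, sum_ncard_supp, hodd]

theorem cliqueNum_compl_eq_ceil_iff [Finite V] (hG : IsLinearForest G) (hodd : Odd (Nat.card V)) :
    (Gᶜ.cliqueNum : ℤ) = ⌈(Nat.card V : ℚ) / 2⌉ ↔ ∃! c, c ∈ G.oddComponents := by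
  have hα := hG.two_mul_indepNum
  have hceil : ⌈(Nat.card V : ℚ) / 2⌉ = -(-(Nat.card V : ℤ) / 2) :=
    Rat.ceil_natCast_div_natCast (Nat.card V) 2
  rw [cliqueNum_compl, hceil, ← Set.singleton_iff_unique_mem, ← Set.ncard_eq_one]
  obtain ⟨k, hk⟩ := hodd
  omega

end IsLinearForest

theorem induce_compl (G : SimpleGraph V) (s : Set V) : Gᶜ.induce s = (G.induce s)ᶜ := by
  ext u v
  simp only [comap_adj, compl_adj, Function.Embedding.subtype_apply, ne_eq, Subtype.ext_iff]

theorem cycleGraph_adj_sub_right {m : ℕ} {u v : Fin m} (a : Fin m) :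
    (cycleGraph m).Adj (u - a) (v - a) ↔ (cycleGraph m).Adj u v := by
  have : NeZero m := a.neZero
  simp only [cycleGraph_adj', sub_sub_sub_cancel_right]

theorem cycleGraph_adj_iff_pathGraph_adj {m : ℕ} [NeZero m] {u v : Fin m} (hu : u ≠ 0)
    (hv : v ≠ 0) : (cycleGraph m).Adj u v ↔ (pathGraph m).Adj u v := by
  wlog huv : u < v generalizing u v
  · obtain rfl | hvu := (not_lt.1 huv).eq_or_lt
    · simp
    · rw [adj_comm, this hv hu hvu, adj_comm]
  rw [← Fin.pos_iff_ne_zero, Fin.lt_def, Fin.val_zero] at hu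
  rw [cycleGraph_adj', pathGraph_adj, Fin.coe_sub_iff_lt.2 huv, Fin.coe_sub_iff_le.2 huv.le]
  omega

theorem nonempty_induce_cycleGraph_embedding_pathGraph {m : ℕ} {a : Fin m} {s : Set (Fin m)}
    (ha : a ∉ s) : Nonempty ((cycleGraph m).induce s ↪g pathGraph m) := by
  have : NeZero m := a.neZero
  have hne (v : s) : v.1 - a ≠ 0 := sub_ne_zero.2 (ne_of_mem_of_not_mem v.2 ha)
  refine ⟨⟨⟨fun v ↦ v.1 - a, fun u v h ↦ Subtype.ext (sub_left_injective h)⟩, fun {u v} ↦ ?_⟩⟩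
  exact (cycleGraph_adj_iff_pathGraph_adj (hne u) (hne v)).symm.trans (cycleGraph_adj_sub_right a)

theorem isLinearForest_induce_cycleGraph {m : ℕ} {s : Set (Fin m)} (hs : s ≠ Set.univ) :
    IsLinearForest ((cycleGraph m).induce s) := by
  obtain ⟨a, ha⟩ := (Set.ne_univ_iff_exists_notMem s).1 hs
  obtain ⟨f⟩ := nonempty_induce_cycleGraph_embedding_pathGraph ha
  exact .of_embedding_hasse f

theorem cliqueNum_induce_compl_cycle_eq_iff_odd_general {m : ℕ} (S : Finset (Fin m))
    (hS : S.card < m) (hodd : Odd S.card) :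
    (((cycleGraph m)ᶜ.induce (S : Set (Fin m))).cliqueNum : ℤ) = ⌈(S.card : ℚ) / 2⌉ ↔
      ∃! c : ((cycleGraph m).induce (S : Set (Fin m))).ConnectedComponent, Odd c.supp.ncard := by
  have hforest : IsLinearForest ((cycleGraph m).induce (S : Set (Fin m))) := by
    apply isLinearForest_induce_cycleGraph
    intro h
    simp [Finset.coe_eq_univ.1 h] at hS
  have hcard : Nat.card (S : Set (Fin m)) = S.card := by simp
  rw [← hcard] at hodd ⊢
  rw [induce_compl]
  exact hforest.cliqueNum_compl_eq_ceil_iff hodd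

end

/-- **Lemma 1 (odd case).** Let `V ⊆ V(C_{2p+1})` with `|V| = n < 2p+1`, `n` odd, and
let `G = C̄_{2p+1}[V]`.  Then `cl(G) = ⌈n/2⌉` if and only if exactly one connected
component of `C_{2p+1}[V]` has an odd number of vertices. -/
theorem cliqueNum_induce_compl_cycle_eq_iff_odd (p : ℕ) (hp : 1 ≤ p)
    (S : Finset (Fin (2*p+1))) (n : ℕ) (hcard : S.card = n) (hn : n < 2*p+1)
    (hno : Odd n) :
    (((((SimpleGraph.cycleGraph (2*p+1))ᶜ.induce (S : Set (Fin (2*p+1)))).cliqueNum : ℤ))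
        = ⌈(n : ℚ) / 2⌉)
      ↔ ∃! c : ((SimpleGraph.cycleGraph (2*p+1)).induce
          (S : Set (Fin (2*p+1)))).ConnectedComponent, Odd c.supp.ncard := by
  subst hcard
  exact cliqueNum_induce_compl_cycle_eq_iff_odd_general S hn hno
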